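/- Let K be a field with more than 2 elements, and n ≥ 2, p ≥ 2 integers. Let S be a linear subspace of Mat_{n,p}(K) with codim S ≤ 2n−3. Then every range-compatible K-linear map F : S → K^n is local. -/

import Mathlib

/-!
Let `V = K ^ n` and `U = K ^ p`. Transposing `F`, and writing `T` for the restriction to `S` of the
trace pairing with operators `V → U`, range-compatibility says that each `y : Dual K V` has some
`x : U` with `y ∘ F = T (y.smulRight x)`, and locality that one `x` serves all `y`. The orthogonal
complement of `S` is `ker T`, of dimension at most `2 * n - 3`.

The proof is by induction on `n`, dividing `V` by lines. If `F` is local modulo two independent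
vectors `h` and `k`, then comparing the two local representatives exhibits `2 * n - 2` independent
operators in `ker T` unless `F` is local. Dividing by `h` preserves the bound on `ker T` as soon as
the operators in `ker T` take two independent values at `h`. The vectors with this property
contain the nonzeros of a quadratic form, so if there is one then, as `|K| > 2`, there are two
independent ones. If there is none and `dim (ker T) ≥ 2`, then all operators in `ker T` have
their range in a common line, a case that is settled directly; and if `dim (ker T) ≤ 1`, any two
independent vectors can be used.
-/

open Module

section LinearAlgebra

variable {K U V W Y : Type*} [Field K] [AddCommGroup U] [Module K U] [AddCommGroup V] [Module K V]
  [AddCommGroup W] [Module K W] [AddCommGroup Y] [Module K Y]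

lemma exists_ne_zero_ne_one (hK : 2 < Cardinal.mk K) : ∃ a : K, a ≠ 0 ∧ a ≠ 1 := by
  simpa using Cardinal.exists_notMem_of_length_lt [(0 : K), 1] (by simpa using hK)

lemma linearIndependent_pair_iff_notMem_span {x y : V} (hx : x ≠ 0) :
    LinearIndependent K ![x, y] ↔ y ∉ Submodule.span K {x} := by
  simp [LinearIndependent.pair_iff' hx, Submodule.mem_span_singleton]

lemma exists_mem_notMem_notMem {L p q : Submodule K Y} (hp : ¬L ≤ p) (hq : ¬L ≤ q) :
    ∃ v ∈ L, v ∉ p ∧ v ∉ q := by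
  obtain ⟨v, hvL, hvp⟩ := SetLike.not_le_iff_exists.mp hp
  obtain ⟨w, hwL, hwq⟩ := SetLike.not_le_iff_exists.mp hq
  by_cases hvq : v ∈ q
  · by_cases hwp : w ∈ p
    · exact ⟨v + w, L.add_mem hvL hwL, by rwa [p.add_mem_iff_left hwp],
        by rwa [q.add_mem_iff_right hvq]⟩
    · exact ⟨w, hwL, hwp, hwq⟩
  · exact ⟨v, hvL, hvp, hvq⟩

lemma exists_forall_add_smul_mem_imp_eq (p : Submodule K Y) (y : Y) {v : Y} (hv : v ∉ p) :
    ∃ s : K, ∀ t : K, y + t • v ∈ p → t = s := by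
  by_cases hs : ∃ s : K, y + s • v ∈ p
  · obtain ⟨s, hs⟩ := hs
    refine ⟨s, fun t ht ↦ by_contra fun hts ↦ hv ?_⟩
    have hdiff : (t - s) • v ∈ p := by simpa [sub_smul] using p.sub_mem ht hs
    exact (p.smul_mem_iff (sub_ne_zero.mpr hts)).mp hdiff
  · exact ⟨0, fun t ht ↦ absurd ⟨t, ht⟩ hs⟩

lemma le_span_sdiff_union (hK : 2 < Cardinal.mk K) {L p q : Submodule K Y}
    (hp : ¬L ≤ p) (hq : ¬L ≤ q) : L ≤ Submodule.span K ((L : Set Y) \ (p ∪ q)) := by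
  intro y hy
  obtain ⟨v, hvL, hvp, hvq⟩ := exists_mem_notMem_notMem hp hq
  obtain ⟨r, hr⟩ := exists_forall_add_smul_mem_imp_eq p y hvp
  obtain ⟨s, hs⟩ := exists_forall_add_smul_mem_imp_eq q y hvq
  obtain ⟨t, ht⟩ := Cardinal.exists_notMem_of_length_lt [r, s] (by simpa using hK)
  simp only [List.mem_cons, List.not_mem_nil, or_false, not_or] at ht
  have hv : v ∈ Submodule.span K ((L : Set Y) \ (p ∪ q)) :=
    Submodule.subset_span ⟨hvL, by simp [hvp, hvq]⟩
  have hyv : y + t • v ∈ Submodule.span K ((L : Set Y) \ (p ∪ q)) :=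
    Submodule.subset_span ⟨L.add_mem hy (L.smul_mem t hvL),
      not_or.mpr ⟨fun h ↦ ht.1 (hr t h), fun h ↦ ht.2 (hs t h)⟩⟩
  exact (Submodule.add_mem_iff_left _ (Submodule.smul_mem _ t hv)).mp hyv

lemma exists_eq_smul_of_forall_mem_span (f g : Y →ₗ[K] W)
    (h : ∀ y, f y ∈ Submodule.span K {g y}) : ∃ c : K, f = c • g := by
  obtain ⟨s, hs⟩ := g.rangeRestrict.exists_rightInverse_of_surjective g.range_rangeRestrict
  have hgs (w : LinearMap.range g) : g (s w) = w := congrArg Subtype.val (LinearMap.congr_fun hs w)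
  have hfs (w : LinearMap.range g) : ∃ c : K, c • (w : W) = f (s w) := by
    simpa [Submodule.mem_span_singleton, hgs] using h (s w)
  have hmem (w : LinearMap.range g) : f (s w) ∈ LinearMap.range g := by
    obtain ⟨c, hc⟩ := hfs w
    exact hc ▸ Submodule.smul_mem _ c w.2
  obtain ⟨c, hc⟩ := LinearMap.exists_eq_smul_id_of_forall_notLinearIndependent
    (f := (f ∘ₗ s).codRestrict _ hmem) fun w hw ↦ by
      obtain ⟨c, hc⟩ := hfs w
      exact (LinearIndependent.pair_iff' (hw.ne_zero 0)).mp hw c (Subtype.ext hc)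
  refine ⟨c, LinearMap.ext fun y ↦ ?_⟩
  have hker : f (y - s (g.rangeRestrict y)) = 0 := by
    simpa [hgs] using h (y - s (g.rangeRestrict y))
  rw [map_sub, sub_eq_zero] at hker
  rw [hker]
  exact congrArg Subtype.val (LinearMap.congr_fun hc (g.rangeRestrict y))

lemma exists_eq_smulRight_of_ker_le_ker (f : Dual K Y) (g : Y →ₗ[K] W)
    (h : LinearMap.ker f ≤ LinearMap.ker g) : ∃ w : W, g = f.smulRight w := by
  rcases eq_or_ne f 0 with rfl | hf
  · exact ⟨0, by simpa using h⟩
  · obtain ⟨e, he⟩ := LinearMap.surjective hf 1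
    refine ⟨g e, LinearMap.ext fun y ↦ ?_⟩
    have hy : y - f y • e ∈ LinearMap.ker g := h (by simp [he])
    simpa [sub_eq_zero] using hy

lemma not_ker_le_ker_of_linearIndependent {f₁ f₂ : Dual K Y}
    (h : LinearIndependent K ![f₁, f₂]) : ¬LinearMap.ker f₂ ≤ LinearMap.ker f₁ := by
  intro hle
  obtain ⟨c, hc⟩ := exists_eq_smulRight_of_ker_le_ker f₂ f₁ hle
  refine (linearIndependent_fin2.mp h).2 c (LinearMap.ext fun y ↦ ?_)
  simp [hc, mul_comm]

lemma quadraticForm_ne_zero_or_add_or_add_smul (Q : QuadraticForm K V) {x : V} (hx : Q x ≠ 0)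
    (y : V) {a : K} (ha : a ≠ 1) : Q y ≠ 0 ∨ Q (x + y) ≠ 0 ∨ Q (x + a • y) ≠ 0 := by
  by_contra! h
  obtain ⟨hy, hxy, hxay⟩ := h
  simp only [QuadraticMap.map_add, QuadraticMap.map_smul, QuadraticMap.polar_smul_right, hy,
    smul_eq_mul, mul_zero, add_zero] at hxy hxay
  have hprod : (1 - a) * Q x = 0 := by linear_combination hxay - a * hxy
  exact mul_ne_zero (sub_ne_zero.mpr ha.symm) hx hprod

lemma exists_linearIndependent_quadraticForm_ne_zero (hK : 2 < Cardinal.mk K)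
    (hV : 1 < finrank K V) (Q : QuadraticForm K V) {x : V} (hx : Q x ≠ 0) :
    ∃ y, LinearIndependent K ![x, y] ∧ Q y ≠ 0 := by
  obtain ⟨a, ha₀, ha₁⟩ := exists_ne_zero_ne_one hK
  have hx₀ : x ≠ 0 := by rintro rfl; simp at hx
  obtain ⟨y, hxy⟩ := exists_linearIndependent_pair_of_one_lt_finrank hV hx₀
  rcases quadraticForm_ne_zero_or_add_or_add_smul Q hx y ha₁ with hy | hy | hy
  · exact ⟨y, hxy, hy⟩
  · exact ⟨x + y, by simpa using hxy, hy⟩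
  · have hind := (LinearIndependent.pair_add_smul_add_smul_iff (R := K) (x := x) (y := y)
      1 0 1 a).mpr ⟨hxy, by simpa using ha₀⟩
    exact ⟨x + a • y, by simpa using hind, hy⟩

section RankTwo

variable [FiniteDimensional K Y] {f₁ f₂ : Dual K Y} {A B : W}

lemma two_mul_finrank_le_of_eq_smul (hK : 2 < Cardinal.mk K) (hf : LinearIndependent K ![f₁, f₂])
    (hA : A ≠ 0) {c : K} (hc : c ≠ 0) :
    2 * finrank K Y ≤ finrank K (LinearMap.ker (f₁.smulRight A + f₂.smulRight (c • A))) +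
      finrank K (Submodule.span K
        {y | f₁ y • A ∉ Submodule.span K {f₁ y • A + f₂ y • c • A}}) + 2 := by
  have hker : LinearMap.ker (f₁.smulRight A + f₂.smulRight (c • A)) =
      LinearMap.ker (f₁ + c • f₂) := by
    ext y
    simp [smul_smul, ← add_smul, hA, mul_comm]
  have hind : LinearIndependent K ![f₁, f₁ + c • f₂] := by
    simpa using (LinearIndependent.pair_add_smul_add_smul_iff (R := K) (x := f₁) (y := f₂)
      1 0 1 c).mpr ⟨hf, by simpa using hc⟩
  have hnle := not_ker_le_ker_of_linearIndependent hind
  have hspan : LinearMap.ker (f₁ + c • f₂) ≤ Submodule.span K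
      {y | f₁ y • A ∉ Submodule.span K {f₁ y • A + f₂ y • c • A}} := by
    refine (le_span_sdiff_union hK hnle hnle).trans (Submodule.span_mono ?_)
    rintro y ⟨hy, hfy⟩
    rw [← hker] at hy
    have hgy : f₁ y • A + f₂ y • c • A = 0 := hy
    simpa [hgy, hA] using hfy
  have hdim := Module.Dual.finrank_ker_add_one_of_ne_zero (f := f₁ + c • f₂)
    (by simpa using hind.ne_zero 1)
  have hle := Submodule.finrank_mono hspan
  rw [hker]
  omega

lemma two_mul_finrank_le_of_linearIndependent (hK : 2 < Cardinal.mk K) (hf₁ : f₁ ≠ 0)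
    (hf₂ : f₂ ≠ 0) (hAB : LinearIndependent K ![A, B]) :
    2 * finrank K Y ≤ finrank K (LinearMap.ker (f₁.smulRight A + f₂.smulRight B)) +
      finrank K (Submodule.span K
        {y | f₁ y • A ∉ Submodule.span K {f₁ y • A + f₂ y • B}}) + 2 := by
  have hrange : LinearMap.range (f₁.smulRight A + f₂.smulRight B) ≤
      Submodule.span K (Set.range ![A, B]) := by
    rintro _ ⟨y, rfl⟩
    exact (Submodule.mem_span_range_iff_exists_fun K).mpr ⟨![f₁ y, f₂ y], by simp⟩
  have := FiniteDimensional.span_of_finite K (Set.finite_range ![A, B])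
  have hrank := (Submodule.finrank_mono hrange).trans_eq (finrank_span_eq_card hAB)
  have hspan : ⊤ ≤ Submodule.span K
      {y | f₁ y • A ∉ Submodule.span K {f₁ y • A + f₂ y • B}} := by
    refine (le_span_sdiff_union hK (p := LinearMap.ker f₁) (q := LinearMap.ker f₂)
      (by simpa [LinearMap.ker_eq_top] using hf₁)
      (by simpa [LinearMap.ker_eq_top] using hf₂)).trans (Submodule.span_mono ?_)
    rintro y ⟨-, hy⟩ hmem
    obtain ⟨t, ht⟩ := Submodule.mem_span_singleton.mp hmem
    have hcomb : ((t - 1) * f₁ y) • A + (t * f₂ y) • B = 0 := by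
      rw [← sub_eq_zero] at ht
      rw [← ht]
      module
    obtain ⟨hA, hB⟩ := LinearIndependent.pair_iff.mp hAB _ _ hcomb
    simp only [Set.mem_union, SetLike.mem_coe, LinearMap.mem_ker, not_or] at hy
    have ht₀ : t = 0 := (mul_eq_zero.mp hB).resolve_right hy.2
    simp [ht₀, hy.1] at hA
  have hdim := LinearMap.finrank_range_add_finrank_ker (f₁.smulRight A + f₂.smulRight B)
  have hle := Submodule.finrank_mono hspan
  rw [finrank_top] at hle
  rw [Fintype.card_fin] at hrank
  omega

end RankTwo

lemma two_mul_finrank_le_finrank_ker_add_finrank_span [FiniteDimensional K Y]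
    (hK : 2 < Cardinal.mk K) {f₁ f₂ : Dual K Y} (hf : LinearIndependent K ![f₁, f₂]) {A B : W}
    (hA : A ≠ 0) (hB : B ≠ 0) :
    2 * finrank K Y ≤ finrank K (LinearMap.ker (f₁.smulRight A + f₂.smulRight B)) +
      finrank K (Submodule.span K
        {y | f₁ y • A ∉ Submodule.span K {f₁ y • A + f₂ y • B}}) + 2 := by
  by_cases hAB : LinearIndependent K ![A, B]
  · exact two_mul_finrank_le_of_linearIndependent hK (hf.ne_zero 0) (hf.ne_zero 1) hAB
  · rw [linearIndependent_pair_iff_notMem_span hA, not_not] at hAB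
    obtain ⟨c, rfl⟩ := Submodule.mem_span_singleton.mp hAB
    exact two_mul_finrank_le_of_eq_smul hK hf hA (left_ne_zero_of_smul hB)

lemma eq_zero_of_sum_smulRight_eq_zero {ι : Type*} {y : ι → Dual K V}
    (hy : LinearIndependent K y) {s : Finset ι} {x : ι → U}
    (h : ∑ i ∈ s, (y i).smulRight (x i) = 0) {i : ι} (hi : i ∈ s) : x i = 0 := by
  refine (Module.forall_dual_apply_eq_zero_iff K (x i)).mp fun φ ↦ ?_
  refine linearIndependent_iff'.mp hy s (fun i ↦ φ (x i)) ?_ i hi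
  ext v
  simpa [mul_comm] using congrArg φ (LinearMap.congr_fun h v)

lemma linearIndependent_smulRight {ι : Type*} {y : ι → Dual K V} (hy : LinearIndependent K y)
    {x : ι → U} (hx : ∀ i, x i ≠ 0) : LinearIndependent K fun i ↦ (y i).smulRight (x i) := by
  refine linearIndependent_iff'.mpr fun s c hc i hi ↦ ?_
  have hsum : ∑ j ∈ s, (y j).smulRight (c j • x j) = 0 := by
    simpa only [← LinearMap.smulRightₗ_apply, map_smul] using hc
  exact (smul_eq_zero_iff_left (hx i)).mp (eq_zero_of_sum_smulRight_eq_zero hy hsum hi)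

lemma finrank_span_le_of_forall_smulRight_mem {E : Submodule K (V →ₗ[K] U)}
    [FiniteDimensional K E] {Q : Set (Dual K V)} (hQ : ∀ y ∈ Q, ∃ x ≠ 0, y.smulRight x ∈ E) :
    finrank K (Submodule.span K Q) ≤ finrank K E := by
  obtain ⟨b, hbQ, hbspan, hb⟩ := exists_linearIndependent K Q
  choose x hx hxE using fun y : b ↦ hQ y (hbQ y.2)
  have hind : LinearIndependent K fun y : b ↦ (⟨(y : Dual K V).smulRight (x y), hxE y⟩ : E) :=
    .of_comp E.subtype (linearIndependent_smulRight hb hx)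
  have : Finite b := hind.finite
  have := Fintype.ofFinite b
  rw [← hbspan, finrank_span_set_eq_card hb, Set.toFinset_card]
  exact hind.fintype_card_le_finrank

lemma finrank_map_add_finrank_inf_ker (f : V →ₗ[K] W) (p : Submodule K V)
    [FiniteDimensional K p] :
    finrank K (p.map f) + finrank K (p ⊓ LinearMap.ker f : Submodule K V) = finrank K p := by
  have hker : p ⊓ LinearMap.ker f = (LinearMap.ker (f.domRestrict p)).map p.subtype := by
    rw [LinearMap.ker_domRestrict, Submodule.map_comap_subtype]
  rw [hker, Submodule.finrank_map_subtype_eq, ← LinearMap.range_domRestrict,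
    LinearMap.finrank_range_add_finrank_ker]

lemma smulRightₗ_flip_injective {x : U} (hx : x ≠ 0) : Function.Injective
    (LinearMap.smulRightₗ.flip x : Dual K V →ₗ[K] V →ₗ[K] U) := by
  refine (injective_iff_map_eq_zero _).mpr fun y hy ↦ LinearMap.ext fun v ↦ ?_
  simpa [hx] using LinearMap.congr_fun hy v

end LinearAlgebra

section Slice

variable {K U V W : Type*} [Field K] [AddCommGroup U] [Module K U] [AddCommGroup V] [Module K V]
  [AddCommGroup W] [Module K W] (T : (V →ₗ[K] U) →ₗ[K] W)

/-- The restriction of `T` to the operators of rank at most one with range in the line through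
`x`, as a function of `x : U` and of the linear form `y : Dual K V` in `y.smulRight x`. -/
def slice : U →ₗ[K] Dual K V →ₗ[K] W :=
  LinearMap.smulRightₗ.flip.compr₂ T

@[simp]
lemma slice_apply (x : U) (y : Dual K V) : slice T x y = T (y.smulRight x) := rfl

lemma finrank_ker_slice_add_finrank_span_le [FiniteDimensional K (LinearMap.ker T)]
    {x : U} (hx : x ≠ 0) :
    finrank K (LinearMap.ker (slice T x)) + finrank K (Submodule.span K
      {y | ∃ z ∉ Submodule.span K {x}, slice T z y ∈ LinearMap.range (slice T x)}) ≤
      finrank K (LinearMap.ker T) := by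
  let ρ := LinearMap.compRight K (M := V) (Submodule.span K {x}).mkQ
  have hspan : finrank K (Submodule.span K
      {y | ∃ z ∉ Submodule.span K {x}, slice T z y ∈ LinearMap.range (slice T x)}) ≤
      finrank K ((LinearMap.ker T).map ρ) := by
    refine finrank_span_le_of_forall_smulRight_mem ?_
    rintro y ⟨z, hz, y', hy'⟩
    refine ⟨(Submodule.span K {x}).mkQ z, by simpa using hz,
      y.smulRight z - y'.smulRight x, ?_, ?_⟩
    · simpa [sub_eq_zero] using hy'.symm
    · ext v
      simp [ρ]
  have hker : finrank K (LinearMap.ker (slice T x)) ≤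
      finrank K (LinearMap.ker T ⊓ LinearMap.ker ρ : Submodule K (V →ₗ[K] U)) := by
    rw [(Submodule.equivMapOfInjective _ (smulRightₗ_flip_injective hx) _).finrank_eq]
    refine Submodule.finrank_mono ?_
    rintro _ ⟨y, hy, rfl⟩
    refine ⟨hy, ?_⟩
    ext v
    simp [ρ]
  have := finrank_map_add_finrank_inf_ker ρ (LinearMap.ker T)
  omega

lemma two_mul_finrank_le_finrank_ker_add_two [FiniteDimensional K V]
    [FiniteDimensional K (LinearMap.ker T)] (hK : 2 < Cardinal.mk K)
    {f₁ f₂ : Dual K (Dual K V)} (hf : LinearIndependent K ![f₁, f₂]) {A B : W} (hA : A ≠ 0)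
    (hB : B ≠ 0) {x : U} (hx : slice T x = f₁.smulRight A + f₂.smulRight B)
    (hrc : ∀ y, ∃ z, f₁ y • A = slice T z y) :
    2 * finrank K V ≤ finrank K (LinearMap.ker T) + 2 := by
  obtain ⟨e, he₂, he₁⟩ := SetLike.not_le_iff_exists.mp (not_ker_le_ker_of_linearIndependent hf)
  have he : slice T x e = f₁ e • A := by
    simp [hx, LinearMap.mem_ker.mp he₂]
  have hAmem : A ∈ LinearMap.range (slice T x) :=
    (Submodule.smul_mem_iff _ he₁).mp (he ▸ LinearMap.mem_range_self _ e)
  have hx₀ : x ≠ 0 := by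
    rintro rfl
    exact smul_ne_zero he₁ hA (by simpa using he.symm)
  have hsub : {y | f₁ y • A ∉ Submodule.span K {f₁ y • A + f₂ y • B}} ⊆
      {y | ∃ z ∉ Submodule.span K {x}, slice T z y ∈ LinearMap.range (slice T x)} := by
    intro y hy
    obtain ⟨z, hz⟩ := hrc y
    refine ⟨z, fun hzx ↦ hy ?_, hz ▸ Submodule.smul_mem _ _ hAmem⟩
    obtain ⟨c, rfl⟩ := Submodule.mem_span_singleton.mp hzx
    refine Submodule.mem_span_singleton.mpr ⟨c, (hz.trans ?_).symm⟩
    rw [map_smul, LinearMap.smul_apply, hx]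
    rfl
  have hcount := finrank_ker_slice_add_finrank_span_le T hx₀
  have hle := Submodule.finrank_mono (Submodule.span_mono (R := K) hsub)
  have hrank := two_mul_finrank_le_finrank_ker_add_finrank_span hK hf hA hB
  rw [Subspace.dual_finrank_eq, ← hx] at hrank
  omega

variable (Φ : Dual K V →ₗ[K] W)

/-- Range-compatibility of a linear map `F` on an operator space `S`, expressed through the
transpose `Φ` of `F` and the restriction `T` to `S` of the trace pairing with operators. -/
def IsRangeCompatible : Prop := ∀ y, ∃ x, Φ y = slice T x y

/-- Locality, expressed through the same transpose `Φ` as `IsRangeCompatible`. -/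
def IsLocal : Prop := ∃ x, Φ = slice T x

/-- Locality modulo the line through `h`: it is only tested against the linear forms that factor
through the quotient `V ⧸ span K {h}`. -/
def IsLocalModulo (h : V) : Prop := ∃ x, ∀ y : Dual K V, y h = 0 → Φ y = slice T x y

variable {T Φ}

lemma IsLocalModulo.exists_eq_slice_add_smulRight {h : V} (hΦ : IsLocalModulo T Φ h) :
    ∃ x w, Φ = slice T x + (Dual.eval K V h).smulRight w := by
  obtain ⟨x, hx⟩ := hΦ
  obtain ⟨w, hw⟩ := exists_eq_smulRight_of_ker_le_ker (Dual.eval K V h) (Φ - slice T x)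
    fun y hy ↦ sub_eq_zero.mpr (hx y hy)
  exact ⟨x, w, sub_eq_iff_eq_add'.mp hw⟩

lemma IsRangeCompatible.isLocal_of_isLocalModulo [FiniteDimensional K V]
    [FiniteDimensional K (LinearMap.ker T)] (hK : 2 < Cardinal.mk K)
    (hΦ : IsRangeCompatible T Φ) (hT : finrank K (LinearMap.ker T) + 3 ≤ 2 * finrank K V)
    {h k : V} (hhk : LinearIndependent K ![h, k]) (hh : IsLocalModulo T Φ h)
    (hk : IsLocalModulo T Φ k) : IsLocal T Φ := by
  obtain ⟨x₁, A, hA⟩ := hh.exists_eq_slice_add_smulRight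
  obtain ⟨x₂, B, hB⟩ := hk.exists_eq_slice_add_smulRight
  rcases eq_or_ne A 0 with rfl | hA₀
  · exact ⟨x₁, by simpa using hA⟩
  rcases eq_or_ne B 0 with rfl | hB₀
  · exact ⟨x₂, by simpa using hB⟩
  have heval : LinearIndependent K ![Dual.eval K V h, Dual.eval K V k] := by
    refine LinearIndependent.pair_iff.mpr fun a b hab ↦ LinearIndependent.pair_iff.mp hhk a b ?_
    rwa [← map_smul, ← map_smul, ← map_add, Module.eval_apply_eq_zero_iff] at hab
  have hdiff : slice T (x₂ - x₁) =
      (Dual.eval K V h).smulRight A + (Dual.eval K V k).smulRight (-B) := by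
    rw [map_sub, eq_sub_of_add_eq hA.symm, eq_sub_of_add_eq hB.symm]
    ext y
    simp only [LinearMap.sub_apply, LinearMap.add_apply, LinearMap.smulRight_apply, smul_neg]
    abel
  have hrc (y : Dual K V) : ∃ z, Dual.eval K V h y • A = slice T z y := by
    obtain ⟨z, hz⟩ := hΦ y
    refine ⟨z - x₁, ?_⟩
    rw [map_sub, LinearMap.sub_apply, ← hz, hA]
    simp
  have := two_mul_finrank_le_finrank_ker_add_two T hK heval hA₀ (neg_ne_zero.mpr hB₀) hdiff hrc
  omega

end Slice

section Adapted

variable {K U V : Type*} [Field K] [AddCommGroup U] [Module K U] [AddCommGroup V] [Module K V]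

/-- A vector `h` at which the operators of `D` take two linearly independent values. Then the
operators in `D` vanishing at `h` have codimension at least two in `D`. -/
def IsAdapted (D : Submodule K (V →ₗ[K] U)) (h : V) : Prop :=
  ∃ d₁ ∈ D, ∃ d₂ ∈ D, LinearIndependent K ![d₁ h, d₂ h]

variable {D : Submodule K (V →ₗ[K] U)} {h : V}

lemma IsAdapted.exists_quadraticForm (hh : IsAdapted D h) :
    ∃ Q : QuadraticForm K V, Q h ≠ 0 ∧ ∀ k, Q k ≠ 0 → IsAdapted D k := by
  obtain ⟨d₁, hd₁, d₂, hd₂, hd⟩ := hh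
  have exists_dual {u v : U} (huv : LinearIndependent K ![u, v]) :
      ∃ f : Dual K U, f u = 0 ∧ f v ≠ 0 := by
    obtain ⟨f, hfv, hfu⟩ := Submodule.exists_le_ker_of_notMem
      ((linearIndependent_pair_iff_notMem_span (huv.ne_zero 0)).mp huv)
    exact ⟨f, hfu (Submodule.mem_span_singleton_self u), hfv⟩
  obtain ⟨f₁, hf₁, hf₂⟩ := exists_dual hd
  obtain ⟨g₁, hg₁, hg₂⟩ := exists_dual (LinearIndependent.pair_symm_iff.mp hd)
  refine ⟨QuadraticMap.linMulLin (g₁ ∘ₗ d₁) (f₁ ∘ₗ d₂) -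
    QuadraticMap.linMulLin (g₁ ∘ₗ d₂) (f₁ ∘ₗ d₁), by simp [*], fun k hk ↦
    ⟨d₁, hd₁, d₂, hd₂, ?_⟩⟩
  refine LinearIndependent.pair_iff.mpr fun a b hab ↦ ?_
  have hg := congrArg g₁ hab
  have hf := congrArg f₁ hab
  simp only [map_add, map_smul, smul_eq_mul, map_zero] at hg hf
  simp only [sub_apply, QuadraticMap.linMulLin_apply, LinearMap.comp_apply] at hk
  constructor
  · refine (mul_eq_zero.mp ?_).resolve_right hk
    linear_combination f₁ (d₂ k) * hg - g₁ (d₂ k) * hf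
  · refine (mul_eq_zero.mp ?_).resolve_right hk
    linear_combination g₁ (d₁ k) * hf - f₁ (d₁ k) * hg

lemma IsAdapted.exists_linearIndependent_isAdapted (hK : 2 < Cardinal.mk K)
    (hV : 1 < finrank K V) (hh : IsAdapted D h) :
    ∃ k, LinearIndependent K ![h, k] ∧ IsAdapted D k := by
  obtain ⟨Q, hQh, hQ⟩ := hh.exists_quadraticForm
  obtain ⟨k, hhk, hQk⟩ := exists_linearIndependent_quadraticForm_ne_zero hK hV Q hQh
  exact ⟨k, hhk, hQ k hQk⟩

lemma mem_span_singleton_apply_of_not_linearIndependent {f g : V →ₗ[K] U}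
    (hgf : ∀ v, ¬LinearIndependent K ![g v, f v]) {v : V} (hv : g v ≠ 0) :
    f v ∈ Submodule.span K {g v} :=
  not_not.mp ((linearIndependent_pair_iff_notMem_span hv).not.mp (hgf v))

lemma range_le_span_singleton_of_apply_eq_zero {f g : V →ₗ[K] U}
    (hgf : ∀ v, ¬LinearIndependent K ![g v, f v]) {v : V} (hf : f v ≠ 0) (hg : g v = 0) :
    LinearMap.range g ≤ Submodule.span K {f v} := by
  rintro _ ⟨x, rfl⟩
  rcases eq_or_ne (g x) 0 with hgx | hgx
  · exact hgx ▸ zero_mem _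
  have hfx := mem_span_singleton_apply_of_not_linearIndependent hgf hgx
  have hfvx := mem_span_singleton_apply_of_not_linearIndependent hgf (v := v + x)
    (by simpa [hg] using hgx)
  rw [map_add, map_add, hg, zero_add, Submodule.add_mem_iff_left _ hfx] at hfvx
  obtain ⟨c, hc⟩ := Submodule.mem_span_singleton.mp hfvx
  rw [← hc, Submodule.span_singleton_smul_eq (left_ne_zero_of_smul (hc ▸ hf)).isUnit]
  exact Submodule.mem_span_singleton_self _

lemma range_le_span_singleton_of_range_le {f g : V →ₗ[K] U}
    (hgf : ∀ v, ¬LinearIndependent K ![g v, f v]) (hg : g ≠ 0) {u : U}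
    (hgu : LinearMap.range g ≤ Submodule.span K {u}) :
    LinearMap.range f ≤ Submodule.span K {u} := by
  have hmem {w : V} (hw : g w ≠ 0) : f w ∈ Submodule.span K {u} :=
    (Submodule.span_singleton_le_iff_mem _ _).mpr (hgu (LinearMap.mem_range_self g w))
      (mem_span_singleton_apply_of_not_linearIndependent hgf hw)
  obtain ⟨w, hw⟩ := DFunLike.ne_iff.mp hg
  rintro _ ⟨x, rfl⟩
  by_cases hgx : g x = 0
  · have hfxw := hmem (w := x + w) (by simpa [hgx] using hw)
    rwa [map_add, Submodule.add_mem_iff_left _ (hmem hw)] at hfxw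
  · exact hmem hgx

lemma exists_range_le_span_singleton_of_forall_not_isAdapted (hD : 1 < finrank K D)
    (h : ∀ v, ¬IsAdapted D v) : ∃ u : U, ∀ d ∈ D, LinearMap.range d ≤ Submodule.span K {u} := by
  have hdep {f g : V →ₗ[K] U} (hf : f ∈ D) (hg : g ∈ D) (v : V) :
      ¬LinearIndependent K ![f v, g v] := fun hfg ↦ h v ⟨f, hf, g, hg, hfg⟩
  have := Module.nontrivial_of_finrank_pos (zero_lt_one.trans hD)
  obtain ⟨⟨f, hf⟩, hf₀⟩ := exists_ne (0 : D)
  obtain ⟨⟨k, hk⟩, hfk⟩ := exists_linearIndependent_pair_of_one_lt_finrank hD hf₀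
  obtain ⟨v, hfv⟩ := DFunLike.ne_iff.mp fun hf' : f = 0 ↦ hf₀ (Subtype.ext hf')
  obtain ⟨c, hc⟩ := Submodule.mem_span_singleton.mp
    (mem_span_singleton_apply_of_not_linearIndependent (hdep hf hk) hfv)
  have hg₀ : k - c • f ≠ 0 := fun hkf ↦
    (LinearIndependent.pair_iff' hf₀).mp hfk c (Subtype.ext (sub_eq_zero.mp hkf).symm)
  have hg : k - c • f ∈ D := D.sub_mem hk (D.smul_mem c hf)
  exact ⟨f v, fun d hd ↦ range_le_span_singleton_of_range_le (hdep hg hd) hg₀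
    (range_le_span_singleton_of_apply_eq_zero (hdep hg hf) hfv (by simp [hc]))⟩

end Adapted

section Induction

variable {K U V W : Type*} [Field K] [AddCommGroup U] [Module K U] [AddCommGroup V] [Module K V]
  [AddCommGroup W] [Module K W] {T : (V →ₗ[K] U) →ₗ[K] W} {Φ : Dual K V →ₗ[K] W}

lemma IsRangeCompatible.exists_eq_slice_of_linearIndependent (hΦ : IsRangeCompatible T Φ) {u : U}
    (hu : ∀ d ∈ LinearMap.ker T, LinearMap.range d ≤ Submodule.span K {u}) {y₁ y₂ : Dual K V}
    (hy : LinearIndependent K ![y₁, y₂]) {x₁ : U} (hx₁ : Φ y₁ = slice T x₁ y₁) :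
    ∃ x₂, x₂ - x₁ ∈ Submodule.span K {u} ∧ Φ y₂ = slice T x₂ y₂ := by
  obtain ⟨x₂, hx₂⟩ := hΦ y₂
  obtain ⟨x, hx⟩ := hΦ (y₁ + y₂)
  have hker : y₁.smulRight (x₁ - x) + y₂.smulRight (x₂ - x) ∈ LinearMap.ker T := by
    have hΦ₁₂ := map_add Φ y₁ y₂
    rw [hx₁, hx₂, hx] at hΦ₁₂
    simp only [LinearMap.mem_ker, map_add, ← slice_apply, map_sub, LinearMap.sub_apply] at hΦ₁₂ ⊢
    linear_combination (norm := module) -hΦ₁₂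
  have hsum : ∑ i, (![y₁, y₂] i).smulRight
      ((Submodule.span K {u}).mkQ (![x₁ - x, x₂ - x] i)) = 0 := by
    ext v
    have hv := hu _ hker (LinearMap.mem_range_self _ v)
    rw [← Submodule.Quotient.mk_eq_zero] at hv
    simpa using hv
  have hmem (i : Fin 2) : ![x₁ - x, x₂ - x] i ∈ Submodule.span K {u} := by
    simpa using eq_zero_of_sum_smulRight_eq_zero hy hsum (Finset.mem_univ i)
  exact ⟨x₂, by simpa using sub_mem (hmem 1) (hmem 0), hx₂⟩

lemma IsRangeCompatible.isLocal_of_forall_range_le (hΦ : IsRangeCompatible T Φ) {u : U}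
    (hu : ∀ d ∈ LinearMap.ker T, LinearMap.range d ≤ Submodule.span K {u}) : IsLocal T Φ := by
  rcases subsingleton_or_nontrivial (Dual K V) with hsub | hnontriv
  · exact ⟨0, LinearMap.ext fun y ↦ by rw [Subsingleton.elim y 0, map_zero, map_zero]⟩
  obtain ⟨y₀, hy₀⟩ := exists_ne (0 : Dual K V)
  obtain ⟨x, hx⟩ := hΦ y₀
  have hprop (y : Dual K V) : (Φ - slice T x) y ∈ Submodule.span K {slice T u y} := by
    by_cases hy : LinearIndependent K ![y₀, y]
    · obtain ⟨z, hz, hΦz⟩ := hΦ.exists_eq_slice_of_linearIndependent hu hy hx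
      obtain ⟨c, hc⟩ := Submodule.mem_span_singleton.mp hz
      refine Submodule.mem_span_singleton.mpr ⟨c, ?_⟩
      rw [LinearMap.sub_apply, hΦz, ← LinearMap.sub_apply, ← map_sub, ← hc, map_smul,
        LinearMap.smul_apply]
    · rw [linearIndependent_pair_iff_notMem_span hy₀, not_not] at hy
      obtain ⟨c, rfl⟩ := Submodule.mem_span_singleton.mp hy
      simp [hx]
  obtain ⟨c, hc⟩ := exists_eq_smul_of_forall_mem_span _ _ hprop
  exact ⟨x + c • u, by rw [map_add, map_smul, ← hc, add_sub_cancel]⟩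

lemma IsRangeCompatible.isLocal_of_finrank_le_one [FiniteDimensional K V]
    (hΦ : IsRangeCompatible T Φ) (hV : finrank K V ≤ 1) : IsLocal T Φ := by
  rw [← Subspace.dual_finrank_eq] at hV
  obtain ⟨y₀, hy₀⟩ := finrank_le_one_iff.mp hV
  obtain ⟨x, hx⟩ := hΦ y₀
  refine ⟨x, LinearMap.ext fun y ↦ ?_⟩
  obtain ⟨c, rfl⟩ := hy₀ y
  rw [map_smul, map_smul, hx]

lemma finrank_quotient_span_singleton_add_one [FiniteDimensional K V] {h : V} (hh : h ≠ 0) :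
    finrank K (V ⧸ Submodule.span K {h}) + 1 = finrank K V := by
  rw [← finrank_span_singleton (K := K) hh, Submodule.finrank_quotient_add_finrank]

variable (T) in
/-- The restriction of `T` to the operators vanishing at `h`. In terms of the operator space
behind `T`, this is the composition of its elements with the projection `V → V ⧸ span K {h}`. -/
def restrictQuotient (h : V) : (V ⧸ Submodule.span K {h} →ₗ[K] U) →ₗ[K] W :=
  T ∘ₗ LinearMap.lcomp K U (Submodule.span K {h}).mkQ

lemma IsRangeCompatible.comp_mkQ_dualMap (hΦ : IsRangeCompatible T Φ) (h : V) :
    IsRangeCompatible (restrictQuotient T h) (Φ ∘ₗ (Submodule.span K {h}).mkQ.dualMap) :=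
  fun y ↦ hΦ ((Submodule.span K {h}).mkQ.dualMap y)

lemma IsLocal.isLocalModulo {h : V}
    (hΦ : IsLocal (restrictQuotient T h) (Φ ∘ₗ (Submodule.span K {h}).mkQ.dualMap)) :
    IsLocalModulo T Φ h := by
  obtain ⟨x, hx⟩ := hΦ
  refine ⟨x, fun y hy ↦ ?_⟩
  have hle : Submodule.span K {h} ≤ LinearMap.ker y := by simpa using hy
  exact LinearMap.congr_fun hx ((Submodule.span K {h}).liftQ y hle)

lemma map_ker_restrictQuotient_le (h : V) :
    (LinearMap.ker (restrictQuotient T h)).map (LinearMap.lcomp K U (Submodule.span K {h}).mkQ) ≤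
      LinearMap.ker T ⊓ LinearMap.ker (LinearMap.applyₗ h) := by
  rintro _ ⟨d, hd, rfl⟩
  have hmk : (Submodule.span K {h}).mkQ h = 0 :=
    (Submodule.Quotient.mk_eq_zero _).mpr (Submodule.mem_span_singleton_self h)
  exact ⟨hd, by simp [hmk]⟩

lemma lcomp_mkQ_injective (p : Submodule K V) :
    Function.Injective (LinearMap.lcomp K U p.mkQ) :=
  LinearMap.lcomp_injective_of_surjective p.mkQ p.mkQ_surjective

variable [FiniteDimensional K (LinearMap.ker T)]

instance finiteDimensional_ker_restrictQuotient (h : V) :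
    FiniteDimensional K (LinearMap.ker (restrictQuotient T h)) := by
  have := Submodule.finiteDimensional_of_le
    ((map_ker_restrictQuotient_le (T := T) h).trans inf_le_left)
  exact (Submodule.equivMapOfInjective _ (lcomp_mkQ_injective _) _).symm.finiteDimensional

lemma finrank_map_applyₗ_add_finrank_ker_restrictQuotient_le (h : V) :
    finrank K ((LinearMap.ker T).map (LinearMap.applyₗ h)) +
      finrank K (LinearMap.ker (restrictQuotient T h)) ≤ finrank K (LinearMap.ker T) := by
  rw [← finrank_map_add_finrank_inf_ker (LinearMap.applyₗ h) (LinearMap.ker T),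
    (Submodule.equivMapOfInjective _ (lcomp_mkQ_injective _) _).finrank_eq]
  gcongr
  exact Submodule.finrank_mono (map_ker_restrictQuotient_le h)

lemma IsAdapted.finrank_ker_restrictQuotient_add_two_le {h : V}
    (hh : IsAdapted (LinearMap.ker T) h) :
    finrank K (LinearMap.ker (restrictQuotient T h)) + 2 ≤ finrank K (LinearMap.ker T) := by
  obtain ⟨d₁, hd₁, d₂, hd₂, hd⟩ := hh
  have hspan : Submodule.span K (Set.range ![d₁ h, d₂ h]) ≤
      (LinearMap.ker T).map (LinearMap.applyₗ h) := by
    refine Submodule.span_le.mpr (Set.range_subset_iff.mpr (Fin.forall_fin_two.mpr ⟨?_, ?_⟩))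
    exacts [⟨d₁, hd₁, rfl⟩, ⟨d₂, hd₂, rfl⟩]
  have htwo := Submodule.finrank_mono hspan
  rw [finrank_span_eq_card hd, Fintype.card_fin] at htwo
  have := finrank_map_applyₗ_add_finrank_ker_restrictQuotient_le (T := T) h
  omega

variable (T) in
/-- The codimension bound of the theorem, where `ker T` stands for the orthogonal complement of
the operator space. It is relaxed to no bound at all when `finrank K V ≤ 1`, where locality is
automatic, so that it passes to quotients of `V`. -/
def HasSmallDefect : Prop :=
  finrank K V ≤ 1 ∨ finrank K (LinearMap.ker T) + 3 ≤ 2 * finrank K V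

variable [FiniteDimensional K V]

lemma hasSmallDefect_restrictQuotient_of_finrank_ker_le_one
    (hT : finrank K (LinearMap.ker T) ≤ 1) {h : V} (hh : h ≠ 0) :
    HasSmallDefect (restrictQuotient T h) := by
  have hker := finrank_map_applyₗ_add_finrank_ker_restrictQuotient_le (T := T) h
  have hquot := finrank_quotient_span_singleton_add_one (K := K) hh
  unfold HasSmallDefect
  omega

lemma IsAdapted.hasSmallDefect_restrictQuotient
    (hT : finrank K (LinearMap.ker T) + 3 ≤ 2 * finrank K V) {h : V}
    (hh : IsAdapted (LinearMap.ker T) h) : HasSmallDefect (restrictQuotient T h) := by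
  have hh₀ : h ≠ 0 := by
    rintro rfl
    obtain ⟨d₁, -, d₂, -, hd⟩ := hh
    exact hd.ne_zero 0 (map_zero d₁)
  have hker := hh.finrank_ker_restrictQuotient_add_two_le
  have hquot := finrank_quotient_span_singleton_add_one (K := K) hh₀
  right
  omega

lemma exists_hasSmallDefect_restrictQuotient_or_forall_range_le (hK : 2 < Cardinal.mk K)
    (hV : 1 < finrank K V) (hT : finrank K (LinearMap.ker T) + 3 ≤ 2 * finrank K V) :
    (∃ h k : V, LinearIndependent K ![h, k] ∧ HasSmallDefect (restrictQuotient T h) ∧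
      HasSmallDefect (restrictQuotient T k)) ∨
    ∃ u : U, ∀ d ∈ LinearMap.ker T, LinearMap.range d ≤ Submodule.span K {u} := by
  by_cases hker : finrank K (LinearMap.ker T) ≤ 1
  · have := Module.nontrivial_of_finrank_pos (zero_lt_one.trans hV)
    obtain ⟨h, hh⟩ := exists_ne (0 : V)
    obtain ⟨k, hhk⟩ := exists_linearIndependent_pair_of_one_lt_finrank hV hh
    exact .inl ⟨h, k, hhk, hasSmallDefect_restrictQuotient_of_finrank_ker_le_one hker hh,
      hasSmallDefect_restrictQuotient_of_finrank_ker_le_one hker (hhk.ne_zero 1)⟩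
  by_cases hadapted : ∃ h, IsAdapted (LinearMap.ker T) h
  · obtain ⟨h, hh⟩ := hadapted
    obtain ⟨k, hhk, hk⟩ := hh.exists_linearIndependent_isAdapted hK hV
    exact .inl ⟨h, k, hhk, hh.hasSmallDefect_restrictQuotient hT,
      hk.hasSmallDefect_restrictQuotient hT⟩
  · exact .inr (exists_range_le_span_singleton_of_forall_not_isAdapted (not_le.mp hker)
      (not_exists.mp hadapted))

theorem IsRangeCompatible.isLocal (hK : 2 < Cardinal.mk K) (hΦ : IsRangeCompatible T Φ)
    (hT : HasSmallDefect T) : IsLocal T Φ := by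
  induction hn : finrank K V using Nat.strong_induction_on generalizing V with
  | _ n ih =>
    subst hn
    rcases le_or_gt (finrank K V) 1 with hV | hV
    · exact hΦ.isLocal_of_finrank_le_one hV
    replace hT := hT.resolve_left hV.not_ge
    have hmodulo {h : V} (hh : h ≠ 0) (hdefect : HasSmallDefect (restrictQuotient T h)) :
        IsLocalModulo T Φ h := by
      have hlt := finrank_quotient_span_singleton_add_one (K := K) hh
      exact (ih _ (by omega) (hΦ.comp_mkQ_dualMap h) hdefect rfl).isLocalModulo
    rcases exists_hasSmallDefect_restrictQuotient_or_forall_range_le hK hV hT with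
      ⟨h, k, hhk, hh, hk⟩ | ⟨u, hu⟩
    · exact hΦ.isLocal_of_isLocalModulo hK hT hhk (hmodulo (hhk.ne_zero 0) hh)
        (hmodulo (hhk.ne_zero 1) hk)
    · exact hΦ.isLocal_of_forall_range_le hu

end Induction

section OperatorSpace

variable {K U V S : Type*} [Field K] [AddCommGroup U] [Module K U] [AddCommGroup V] [Module K V]
  [AddCommGroup S] [Module K S]

/-- The trace pairing `d ↦ (M ↦ trace (M ∘ d))` between `V →ₗ[K] U` and `U →ₗ[K] V`. -/
noncomputable def tracePairing : (V →ₗ[K] U) →ₗ[K] Dual K (U →ₗ[K] V) :=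
  (LinearMap.llcomp K V U V).flip.compr₂ (LinearMap.trace K V)

lemma tracePairing_apply (d : V →ₗ[K] U) (M : U →ₗ[K] V) :
    tracePairing d M = LinearMap.trace K V (M ∘ₗ d) := rfl

variable [FiniteDimensional K V]

lemma tracePairing_smulRight (x : U) (y : Dual K V) (M : U →ₗ[K] V) :
    tracePairing (y.smulRight x) M = y (M x) := by
  have hcomp : M ∘ₗ y.smulRight x = y.smulRight (M x) := by ext; simp
  rw [tracePairing_apply, hcomp, LinearMap.trace_smulRight]

lemma tracePairing_injective :
    Function.Injective (tracePairing : (V →ₗ[K] U) →ₗ[K] Dual K (U →ₗ[K] V)) := by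
  refine (injective_iff_map_eq_zero _).mpr fun d hd ↦ LinearMap.ext fun v ↦ ?_
  refine (Module.forall_dual_apply_eq_zero_iff K _).mp fun y ↦ ?_
  have hcomp : y.smulRight v ∘ₗ d = (y ∘ₗ d).smulRight v := by ext; simp
  have hv := LinearMap.congr_fun hd (y.smulRight v)
  rwa [tracePairing_apply, hcomp, LinearMap.trace_smulRight] at hv

variable [FiniteDimensional K U]

lemma finrank_ker_dualMap_comp_tracePairing_le (A : S →ₗ[K] U →ₗ[K] V) :
    finrank K (LinearMap.ker (A.dualMap ∘ₗ tracePairing)) ≤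
      finrank K ((U →ₗ[K] V) ⧸ LinearMap.range A) := by
  rw [(Submodule.equivMapOfInjective _ tracePairing_injective _).finrank_eq,
    ← Subspace.dual_finrank_eq, (Submodule.dualQuotEquivDualAnnihilator _).finrank_eq,
    ← LinearMap.ker_dualMap_eq_dualAnnihilator_range, LinearMap.ker_comp]
  exact Submodule.finrank_mono (Submodule.map_comap_le _ _)

lemma isRangeCompatible_dualMap (A : S →ₗ[K] U →ₗ[K] V) {F : S →ₗ[K] V}
    (hF : ∀ s, F s ∈ LinearMap.range (A s)) :
    IsRangeCompatible (A.dualMap ∘ₗ tracePairing) F.dualMap := by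
  intro y
  have hrange : y ∘ₗ F ∈ LinearMap.range (A.compr₂ y).dualMap := by
    rw [LinearMap.range_dualMap_eq_dualAnnihilator_ker, Submodule.mem_dualAnnihilator]
    intro s hs
    obtain ⟨x, hx⟩ := hF s
    simpa [← hx] using LinearMap.congr_fun hs x
  obtain ⟨ξ, hξ⟩ := hrange
  obtain ⟨x, rfl⟩ := (Module.evalEquiv K U).surjective ξ
  refine ⟨x, LinearMap.ext fun s ↦ ?_⟩
  simpa [tracePairing_smulRight] using (LinearMap.congr_fun hξ s).symm

theorem stmt_5_general (hK : 2 < Cardinal.mk K) (A : S →ₗ[K] U →ₗ[K] V)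
    (hcodim : finrank K ((U →ₗ[K] V) ⧸ LinearMap.range A) + 3 ≤ 2 * finrank K V)
    (F : S →ₗ[K] V) (hF : ∀ s, F s ∈ LinearMap.range (A s)) : ∃ x, ∀ s, F s = A s x := by
  have hdefect : HasSmallDefect (A.dualMap ∘ₗ tracePairing) :=
    .inr ((Nat.add_le_add_right (finrank_ker_dualMap_comp_tracePairing_le A) 3).trans hcodim)
  obtain ⟨x, hx⟩ := (isRangeCompatible_dualMap A hF).isLocal hK hdefect
  refine ⟨x, fun s ↦ sub_eq_zero.mp ((Module.forall_dual_apply_eq_zero_iff K _).mp fun y ↦ ?_)⟩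
  have hxy := LinearMap.congr_fun (LinearMap.congr_fun hx y) s
  simpa [tracePairing_smulRight, sub_eq_zero] using hxy

end OperatorSpace

theorem stmt_5 {K : Type*} [Field K] (hK : 2 < Cardinal.mk K)
    (n p : ℕ) (hn : 2 ≤ n) (hp : 2 ≤ p)
    (S : Submodule K (Matrix (Fin n) (Fin p) K))
    (hcodim : Module.finrank K (Matrix (Fin n) (Fin p) K ⧸ S) + 3 ≤ 2 * n)
    (F : S →ₗ[K] (Fin n → K))
    (hrc : ∀ M : S, F M ∈ Set.range (M : Matrix (Fin n) (Fin p) K).mulVec) :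
    ∃ X : Fin p → K, ∀ M : S, F M = (M : Matrix (Fin n) (Fin p) K).mulVec X := by
  refine stmt_5_general hK (Matrix.toLin'.toLinearMap ∘ₗ S.subtype) ?_ F hrc
  rwa [LinearMap.range_comp, Submodule.range_subtype,
    ← (Submodule.Quotient.equiv S _ Matrix.toLin' rfl).finrank_eq, finrank_fin_fun]
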